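/- Let M > 0 and let φ : [0,M] → [0,∞) be a measurable function that is continuous at Lebesgue-almost every point of [0,M] and integrable on [0,M]. Define Φ(z) = ∫_0^z φ(x) dx for z ∈ [0,M], and let Φ* be the greatest convex minorant of Φ on [0,M], i.e. Φ* is convex on [0,M], Φ* ≤ Φ on [0,M], and every convex function ρ on [0,M] with ρ ≤ Φ satisfies ρ ≤ Φ*. Let Φ*′ denote the right derivative of Φ*. Then for every nondecreasing right-continuous function ψ : [0,M] → [0,∞): ∫_0^M (φ(x) − ψ(x))² dx ≥ ∫_0^M (φ(x) − Φ*′(x))² dx + ∫_0^M (Φ*′(x) − ψ(x))² dx. -/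

import Mathlib

open MeasureTheory Filter Set

lemma layer_cake_aux (f h : ℝ → ℝ) (μ : Measure ℝ) [SFinite μ] (hf : Integrable f μ)
    (hh : Measurable h) (N : ℝ) (hb : ∀ᵐ x ∂μ, 0 ≤ h x ∧ h x ≤ N) :
    ∫ x, f x * h x ∂μ = ∫ t in Ioc 0 N, ∫ x in {x | t < h x}, f x ∂μ := by
  have hS : ∀ t, MeasurableSet {x | t < h x} := fun t => measurableSet_lt measurable_const hh
  have h1 : ∀ᵐ x ∂μ, f x * h x = ∫ t in Ioc 0 N, {x | t < h x}.indicator f x := by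
    filter_upwards [hb] with x hx
    have : (fun t => {x | t < h x}.indicator f x) = (Iio (h x)).indicator (fun _ => f x) := by
      ext t; simp [indicator]
    rw [this, setIntegral_indicator measurableSet_Iio]
    have h2 : Ioc 0 N ∩ Iio (h x) = Ioo 0 (h x) := by
      ext t; simp only [mem_inter_iff, mem_Ioc, mem_Iio, mem_Ioo]
      constructor
      · rintro ⟨⟨a, b⟩, c⟩; exact ⟨a, c⟩
      · rintro ⟨a, c⟩; exact ⟨⟨a, by linarith [hx.2]⟩, c⟩
    rw [h2]
    simp [hx.1, mul_comm]
  rw [integral_congr_ae h1, integral_integral_swap]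
  · refine integral_congr_ae (Eventually.of_forall fun t => ?_)
    simp only
    rw [integral_indicator (hS t)]
  · have hms : MeasurableSet {p : ℝ × ℝ | p.2 < h p.1} :=
      measurableSet_lt measurable_snd (hh.comp measurable_fst)
    have : Function.uncurry (fun x t => {x | t < h x}.indicator f x)
        = {p : ℝ × ℝ | p.2 < h p.1}.indicator (fun p => f p.1) := by
      ext ⟨x, t⟩; simp [indicator]
    rw [this]
    refine Integrable.indicator ?_ hms
    exact hf.comp_fst _

lemma upper_set_aux (M : ℝ) (S : Set ℝ) (hS : S ⊆ Ioo 0 M) (hne : S.Nonempty)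
    (hup : ∀ x ∈ S, ∀ y ∈ Ioo 0 M, x ≤ y → y ∈ S) :
    0 ≤ sInf S ∧ sInf S < M ∧ S =ᵐ[volume] Ioo (sInf S) M := by
  have hb : BddBelow S := ⟨0, fun x hx => (hS hx).1.le⟩
  have h0 : 0 ≤ sInf S := le_csInf hne fun x hx => (hS hx).1.le
  obtain ⟨x, hx⟩ := hne
  have hM : sInf S < M := (csInf_le hb hx).trans_lt (hS hx).2
  refine ⟨h0, hM, ?_⟩
  have s1 : Ioo (sInf S) M ⊆ S := by
    intro y hy
    obtain ⟨z, hz, hzy⟩ := exists_lt_of_csInf_lt ⟨x, hx⟩ hy.1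
    exact hup z hz y ⟨h0.trans_lt hy.1, hy.2⟩ hzy.le
  have s2 : S ⊆ Icc (sInf S) M := fun y hy => ⟨csInf_le hb hy, (hS hy).2.le⟩
  refine (LE.le.eventuallyLE s2).trans Ioo_ae_eq_Icc.symm.le |>.antisymm ?_
  exact LE.le.eventuallyLE s1

/-- Properties of the greatest convex minorant. -/
lemma gcm_right_end (M : ℝ) (hM : 0 < M) (Φ G : ℝ → ℝ)
    (hΦc : ContinuousOn Φ (Icc 0 M)) (hΦnn : ∀ z ∈ Icc 0 M, 0 ≤ Φ z)
    (hgreatest : ∀ ρ : ℝ → ℝ, ConvexOn ℝ (Icc (0 : ℝ) M) ρ →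
      (∀ z ∈ Icc (0 : ℝ) M, ρ z ≤ Φ z) → ∀ z ∈ Icc (0 : ℝ) M, ρ z ≤ G z)
    (ε : ℝ) (hε : 0 < ε) : ∃ K : ℝ, 0 ≤ K ∧ ∀ z ∈ Icc (0 : ℝ) M, Φ M - ε - K * (M - z) ≤ G z := by
  have hMm : M ∈ Icc 0 M := ⟨hM.le, le_rfl⟩
  obtain ⟨δ, hδ, hd⟩ := Metric.continuousWithinAt_iff.1 (hΦc M hMm) ε hε
  refine ⟨Φ M / δ, div_nonneg (hΦnn M hMm) hδ.le, ?_⟩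
  refine hgreatest (fun z => Φ M - ε - Φ M / δ * (M - z)) ?_ ?_
  · refine ⟨convex_Icc _ _, fun x _ y _ a b _ _ hab => le_of_eq ?_⟩
    simp only [smul_eq_mul]
    obtain rfl : b = 1 - a := by linarith
    ring
  · intro z hz
    have hK : 0 ≤ Φ M / δ := div_nonneg (hΦnn M hMm) hδ.le
    by_cases h : dist z M < δ
    · have := hd hz h
      rw [Real.dist_eq, abs_lt] at this
      have := mul_nonneg hK (sub_nonneg.2 hz.2)
      linarith
    · rw [Real.dist_eq, abs_sub_comm, abs_of_nonneg (sub_nonneg.2 hz.2)] at h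
      have h1 : Φ M / δ * δ ≤ Φ M / δ * (M - z) := mul_le_mul_of_nonneg_left (not_lt.1 h) hK
      rw [div_mul_cancel₀ _ hδ.ne'] at h1
      linarith [hΦnn z hz]

lemma gcm_cont (M : ℝ) (hM : 0 < M) (Φ G : ℝ → ℝ)
    (hΦc : ContinuousOn Φ (Icc 0 M)) (hΦnn : ∀ z ∈ Icc 0 M, 0 ≤ Φ z) (hΦ0 : Φ 0 = 0)
    (hconv : ConvexOn ℝ (Icc (0 : ℝ) M) G)
    (hminor : ∀ z ∈ Icc (0 : ℝ) M, G z ≤ Φ z)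
    (hgreatest : ∀ ρ : ℝ → ℝ, ConvexOn ℝ (Icc (0 : ℝ) M) ρ →
      (∀ z ∈ Icc (0 : ℝ) M, ρ z ≤ Φ z) → ∀ z ∈ Icc (0 : ℝ) M, ρ z ≤ G z) :
    G 0 = 0 ∧ G M = Φ M ∧ (∀ z ∈ Icc (0 : ℝ) M, 0 ≤ G z) ∧ ContinuousOn G (Icc 0 M) := by
  have hMm : M ∈ Icc 0 M := ⟨hM.le, le_rfl⟩
  have h0m : (0:ℝ) ∈ Icc 0 M := ⟨le_rfl, hM.le⟩
  have hnn : ∀ z ∈ Icc (0 : ℝ) M, 0 ≤ G z :=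
    hgreatest (fun _ => 0) (convexOn_const _ (convex_Icc _ _)) hΦnn
  have h0 : G 0 = 0 := le_antisymm (by linarith [hminor 0 h0m]) (hnn 0 h0m)
  have hGM : G M = Φ M := by
    refine le_antisymm (hminor M hMm) (le_of_forall_pos_le_add fun ε hε => ?_)
    obtain ⟨K, -, hK⟩ := gcm_right_end M hM Φ G hΦc hΦnn hgreatest ε hε
    have := hK M hMm
    simp only [sub_self, mul_zero] at this
    linarith
  refine ⟨h0, hGM, hnn, fun x hx => ?_⟩
  rcases eq_or_lt_of_le hx.1 with h | h
  · subst h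
    have := hΦc 0 hx
    unfold ContinuousWithinAt at this ⊢
    rw [hΦ0] at this
    rw [h0]
    refine tendsto_of_tendsto_of_tendsto_of_le_of_le' tendsto_const_nhds this ?_ ?_
    · filter_upwards [self_mem_nhdsWithin] with z hz using hnn z hz
    · filter_upwards [self_mem_nhdsWithin] with z hz using hminor z hz
  rcases eq_or_lt_of_le hx.2 with h' | h'
  · subst h'
    rw [Metric.continuousWithinAt_iff]
    intro ε hε
    obtain ⟨K, hK0, hK⟩ := gcm_right_end x hM Φ G hΦc hΦnn hgreatest (ε/2) (by positivity)
    obtain ⟨δ, hδ, hd⟩ := Metric.continuousWithinAt_iff.1 (hΦc x hx) ε hε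
    refine ⟨min δ (ε / (2 * (K + 1))), by positivity, fun {z} hz hzx => ?_⟩
    have h1 := hd hz (hzx.trans_le (min_le_left _ _))
    have h2 := hzx.trans_le (min_le_right _ _)
    rw [Real.dist_eq, abs_sub_comm, abs_of_nonneg (sub_nonneg.2 hz.2), lt_div_iff₀ (by positivity)] at h2
    rw [Real.dist_eq, abs_lt] at h1 ⊢
    have h3 := hK z hz
    have h4 := hminor z hz
    have h5 := hz.2
    constructor <;> nlinarith
  · have := hconv.continuousOn_interior
    rw [interior_Icc] at this
    exact (this.continuousAt (Ioo_mem_nhds h h')).continuousWithinAt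

lemma gcm_flat (M : ℝ) (Φ G : ℝ → ℝ)
    (hΦc : ContinuousOn Φ (Icc 0 M)) (hGc : ContinuousOn G (Icc 0 M))
    (hconv : ConvexOn ℝ (Icc (0 : ℝ) M) G)
    (hminor : ∀ z ∈ Icc (0 : ℝ) M, G z ≤ Φ z)
    (hgreatest : ∀ ρ : ℝ → ℝ, ConvexOn ℝ (Icc (0 : ℝ) M) ρ →
      (∀ z ∈ Icc (0 : ℝ) M, ρ z ≤ Φ z) → ∀ z ∈ Icc (0 : ℝ) M, ρ z ≤ G z)
    (a : ℝ) (ha : a ∈ Ioo 0 M) (hlt : G a < Φ a) :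
    ∃ δ > 0, ∃ s, Ioo (a - δ) (a + δ) ⊆ Ioo 0 M ∧
      ∀ x ∈ Ioo (a - δ) (a + δ), derivWithin G (Ici x) x = s := by
  have hnh : Icc 0 M ∈ nhds a := Icc_mem_nhds ha.1 ha.2
  obtain ⟨c, hc1, hc2⟩ := exists_between hlt
  have e1 : ∀ᶠ x in nhds a, G x < c := (hGc.continuousAt hnh).eventually_lt_const hc1
  have e2 : ∀ᶠ x in nhds a, c < Φ x := (hΦc.continuousAt hnh).eventually_const_lt hc2
  have e3 : ∀ᶠ x in nhds a, x ∈ Ioo 0 M := Ioo_mem_nhds ha.1 ha.2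
  obtain ⟨η, hη, hd⟩ := Metric.eventually_nhds_iff.1 (e1.and (e2.and e3))
  set δ := η / 2 with hδ
  have hδ0 : 0 < δ := by positivity
  have hd' : ∀ x ∈ Icc (a - δ) (a + δ), G x < c ∧ c < Φ x ∧ x ∈ Ioo 0 M := by
    intro x hx
    apply hd
    rw [Real.dist_eq, abs_lt]
    constructor <;> linarith [hx.1, hx.2]
  set p := a - δ with hp
  set q := a + δ with hq
  have hpq : p < q := by linarith
  have hpm : p ∈ Icc p q := ⟨le_rfl, hpq.le⟩
  have hqm : q ∈ Icc p q := ⟨hpq.le, le_rfl⟩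
  have hpM : p ∈ Icc 0 M := Ioo_subset_Icc_self (hd' p hpm).2.2
  have hqM : q ∈ Icc 0 M := Ioo_subset_Icc_self (hd' q hqm).2.2
  set s := (G q - G p) / (q - p) with hs
  have hsq : G q = G p + s * (q - p) := by
    rw [hs, div_mul_cancel₀ _ (by linarith)]; ring
  have hLin : ConvexOn ℝ (Icc (0 : ℝ) M) (fun x => G p + s * (x - p)) := by
    refine ⟨convex_Icc _ _, fun x _ y _ a b _ _ hab => le_of_eq ?_⟩
    simp only [smul_eq_mul]
    obtain rfl : b = 1 - a := by linarith
    ring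
  have hle : ∀ z ∈ Icc (0:ℝ) M, G p + s * (z - p) ≤ Φ z := by
    intro z hz
    by_cases hzp : z < p
    · have := hconv.secant_mono_aux1 hz hqM hzp hpq
      have : G p + s * (z - p) ≤ G z := by
        rw [hsq] at this
        have h2 : 0 < q - p := by linarith
        nlinarith
      exact this.trans (hminor z hz)
    by_cases hzq : q < z
    · have := hconv.secant_mono_aux1 hpM hz hpq hzq
      have : G p + s * (z - p) ≤ G z := by
        rw [hsq] at this
        have h2 : 0 < q - p := by linarith
        nlinarith
      exact this.trans (hminor z hz)
    push Not at hzp hzq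
    have h1 := (hd' z ⟨hzp, hzq⟩).2.1
    have h2 := (hd' p hpm).1
    have h3 := (hd' q hqm).1
    rw [hsq] at h3
    rcases le_total 0 s with h | h <;> nlinarith
  have key := hgreatest _ hLin hle
  have hEq : ∀ x ∈ Icc p q, G x = G p + s * (x - p) := by
    intro x hx
    refine le_antisymm ?_ (key x (Ioo_subset_Icc_self (hd' x hx).2.2))
    rcases eq_or_lt_of_le hx.1 with h | h
    · rw [← h]; simp
    rcases eq_or_lt_of_le hx.2 with h' | h'
    · rw [h', hsq]
    have := hconv.secant_mono_aux1 hpM hqM h h'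
    rw [hsq] at this
    have h2 : 0 < q - p := by linarith
    nlinarith
  refine ⟨δ, hδ0, s, fun x hx => (hd' x (Ioo_subset_Icc_self hx)).2.2, fun x hx => ?_⟩
  have hev : G =ᶠ[nhds x] fun x => G p + s * (x - p) := by
    filter_upwards [Ioo_mem_nhds hx.1 hx.2] with y hy using hEq y (Ioo_subset_Icc_self hy)
  have hder : HasDerivAt (fun x => G p + s * (x - p)) s x := by
    simpa using (((hasDerivAt_id x).sub_const p).const_mul s).const_add (G p)
  exact (hder.congr_of_eventuallyEq hev).hasDerivWithinAt.derivWithin (uniqueDiffOn_Ici x x self_mem_Ici)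

lemma gcm_deriv (M : ℝ) (hM : 0 < M) (G : ℝ → ℝ) (hG0 : G 0 = 0)
    (hGnn : ∀ z ∈ Icc (0 : ℝ) M, 0 ≤ G z) (hGc : ContinuousOn G (Icc 0 M))
    (hconv : ConvexOn ℝ (Icc (0 : ℝ) M) G) :
    MonotoneOn (fun x => derivWithin G (Ici x) x) (Ioo 0 M) ∧
    (∀ x ∈ Ioo 0 M, 0 ≤ derivWithin G (Ici x) x) ∧
    IntegrableOn (fun x => derivWithin G (Ici x) x) (Ioo 0 M) ∧
    ∀ a, 0 ≤ a → a < M → ∫ x in Ioo a M, derivWithin G (Ici x) x = G M - G a := by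
  have hder : ∀ x ∈ Ioo 0 M, HasDerivWithinAt G (derivWithin G (Ici x) x) (Ioi x) x := by
    intro x hx
    rw [← derivWithin_Ioi_eq_Ici]
    exact hconv.hasDerivWithinAt_rightDeriv_of_mem_interior (by rwa [interior_Icc])
  have hnn : ∀ x ∈ Ioo 0 M, 0 ≤ derivWithin G (Ici x) x := by
    intro x hx
    have hxI := Ioo_subset_Icc_self hx
    refine ge_of_tendsto ((hasDerivWithinAt_iff_tendsto_slope' self_notMem_Ioi).mp (hder x hx)) ?_
    filter_upwards [Ioo_mem_nhdsGT hx.2] with y hy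
    have h1 := hconv.slope_mono_adjacent (x := 0) (y := x) (z := y) ⟨le_rfl, hM.le⟩
      ⟨hx.1.le.trans hy.1.le, hy.2.le⟩ hx.1 hy.1
    rw [slope_def_field]
    refine le_trans ?_ h1
    rw [hG0, sub_zero, sub_zero]
    exact div_nonneg (hGnn x hxI) hx.1.le
  have hint : IntegrableOn (fun x => derivWithin G (Ici x) x) (Ioc 0 M) :=
    intervalIntegral.integrableOn_deriv_right_of_nonneg hGc hder hnn
  refine ⟨?_, hnn, hint.mono_set Ioo_subset_Ioc_self, fun a ha haM => ?_⟩
  · have := hconv.monotoneOn_rightDeriv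
    rw [interior_Icc] at this
    simpa only [derivWithin_Ioi_eq_Ici] using this
  · have := intervalIntegral.integral_eq_sub_of_hasDeriv_right_of_le haM.le
      (hGc.mono (Icc_subset_Icc_left ha)) (fun x hx => hder x ⟨ha.trans_lt hx.1, hx.2⟩)
      ((intervalIntegrable_iff_integrableOn_Ioc_of_le haM.le).2
        (hint.mono_set (Ioc_subset_Ioc_left ha)))
    rw [← this, intervalIntegral.integral_of_le haM.le, integral_Ioc_eq_integral_Ioo]

lemma tail_integral_aux (M : ℝ) (f h : ℝ → ℝ) (hh : Measurable h)
    (hmono : MonotoneOn h (Ioo 0 M)) (t : ℝ) :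
    (∫ x in {x | t < h x}, f x ∂(volume.restrict (Ioo 0 M)) = 0) ∨
    (({x | t < h x} ∩ Ioo 0 M).Nonempty ∧ 0 ≤ sInf ({x | t < h x} ∩ Ioo 0 M) ∧
      sInf ({x | t < h x} ∩ Ioo 0 M) < M ∧
    ∫ x in {x | t < h x}, f x ∂(volume.restrict (Ioo 0 M)) =
      ∫ x in Ioo (sInf ({x | t < h x} ∩ Ioo 0 M)) M, f x) := by
  have hS : MeasurableSet {x | t < h x} := measurableSet_lt measurable_const hh
  rw [Measure.restrict_restrict hS]
  rcases ({x | t < h x} ∩ Ioo 0 M).eq_empty_or_nonempty with he | hne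
  · left; rw [he]; simp
  · right
    obtain ⟨a, b, c⟩ := upper_set_aux M _ inter_subset_right hne (by
      rintro x ⟨hx, hxI⟩ y hy hxy
      exact ⟨lt_of_lt_of_le hx (hmono hxI hy hxy), hy⟩)
    exact ⟨hne, a, b, setIntegral_congr_set c⟩

lemma trunc_ineq (M : ℝ) (φ g ψ : ℝ → ℝ) (μ : Measure ℝ) [IsFiniteMeasure μ]
    (hφ : Measurable φ) (hg : Measurable g) (hψ : Measurable ψ)
    (hφi : Integrable φ μ) (hgi : Integrable g μ)
    (hgnn : ∀ᵐ x ∂μ, 0 ≤ g x) (N : ℝ) (hN : 0 ≤ N)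
    (hψb : ∀ᵐ x ∂μ, 0 ≤ ψ x ∧ ψ x ≤ N)
    (h1 : ∫ x, (φ x - g x) * ψ x ∂μ ≤ 0)
    (h2 : ∫ x, (φ x - g x) * min (g x) N ∂μ = 0)
    (hfin : ∫⁻ x, ENNReal.ofReal ((φ x - ψ x) ^ 2) ∂μ ≠ ⊤) :
    ∫⁻ x, (ENNReal.ofReal ((φ x - min (g x) N) ^ 2) + ENNReal.ofReal ((min (g x) N - ψ x) ^ 2)) ∂μ
      ≤ ∫⁻ x, ENNReal.ofReal ((φ x - ψ x) ^ 2) ∂μ := by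
  have hgN : Measurable fun x => min (g x) N := hg.min measurable_const
  have hD : Integrable (fun x => (φ x - ψ x) ^ 2) μ := by
    refine ⟨((hφ.sub hψ).pow_const 2).aestronglyMeasurable, ?_⟩
    rw [hasFiniteIntegral_iff_ofReal (Eventually.of_forall fun x => sq_nonneg _)]
    exact hfin.lt_top
  have bψ : ∀ᵐ x ∂μ, ‖ψ x‖ ≤ N := by
    filter_upwards [hψb] with x hx
    rw [Real.norm_eq_abs, abs_le]; constructor <;> linarith [hx.1, hx.2]
  have bg : ∀ᵐ x ∂μ, ‖min (g x) N‖ ≤ N := by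
    filter_upwards [hgnn] with x hx
    rw [Real.norm_eq_abs, abs_of_nonneg (le_min hx hN)]; exact min_le_right _ _
  have bd : ∀ᵐ x ∂μ, ‖min (g x) N - ψ x‖ ≤ N + N := by
    filter_upwards [bψ, bg] with x h h'
    exact (norm_sub_le _ _).trans (add_le_add h' h)
  have ig : Integrable (fun x => min (g x) N) μ := Integrable.of_bound hgN.aestronglyMeasurable N bg
  have md : AEStronglyMeasurable (fun x => min (g x) N - ψ x) μ := (hgN.sub hψ).aestronglyMeasurable
  have iC : Integrable (fun x => (φ x - g x) * (min (g x) N - ψ x)) μ := (hφi.sub hgi).mul_bdd md bd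
  have iC' : Integrable (fun x => (φ x - min (g x) N) * (min (g x) N - ψ x)) μ :=
    (hφi.sub ig).mul_bdd md bd
  have hC : 0 ≤ ∫ x, (φ x - g x) * (min (g x) N - ψ x) ∂μ := by
    have e : ∀ x, (φ x - g x) * (min (g x) N - ψ x) =
      (φ x - g x) * min (g x) N - (φ x - g x) * ψ x := fun x => by ring
    simp_rw [e]
    have i1 : Integrable (fun x => (φ x - g x) * min (g x) N) μ :=
      (hφi.sub hgi).mul_bdd hgN.aestronglyMeasurable bg
    have i2 : Integrable (fun x => (φ x - g x) * ψ x) μ :=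
      (hφi.sub hgi).mul_bdd hψ.aestronglyMeasurable bψ
    rw [integral_sub i1 i2, h2]
    linarith
  have hC' : 0 ≤ ∫ x, (φ x - min (g x) N) * (min (g x) N - ψ x) ∂μ := by
    refine hC.trans (integral_mono_ae iC iC' ?_)
    filter_upwards [hψb] with x hx
    rcases le_total (g x) N with h | h
    · simp [min_eq_left h]
    · simp only [min_eq_right h]
      nlinarith [hx.2]
  have e : ∀ x, (φ x - min (g x) N) ^ 2 + (min (g x) N - ψ x) ^ 2 =
      (φ x - ψ x) ^ 2 - 2 * ((φ x - min (g x) N) * (min (g x) N - ψ x)) := fun x => by ring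
  have e' : ∀ x, ENNReal.ofReal ((φ x - min (g x) N) ^ 2) + ENNReal.ofReal ((min (g x) N - ψ x) ^ 2)
      = ENNReal.ofReal ((φ x - ψ x) ^ 2 - 2 * ((φ x - min (g x) N) * (min (g x) N - ψ x))) := by
    intro x
    rw [← e, ENNReal.ofReal_add (sq_nonneg _) (sq_nonneg _)]
  simp_rw [e']
  have iE : Integrable (fun x => (φ x - ψ x) ^ 2 -
      2 * ((φ x - min (g x) N) * (min (g x) N - ψ x))) μ := hD.sub (iC'.const_mul 2)
  rw [← ofReal_integral_eq_lintegral_ofReal iE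
      (Eventually.of_forall fun x => by
        change (0:ℝ) ≤ (φ x - ψ x) ^ 2 - 2 * ((φ x - min (g x) N) * (min (g x) N - ψ x))
        rw [← e]; positivity),
    ← ofReal_integral_eq_lintegral_ofReal hD (Eventually.of_forall fun x => sq_nonneg _)]
  apply ENNReal.ofReal_le_ofReal
  rw [integral_sub hD (iC'.const_mul 2), integral_const_mul]
  linarith

lemma fatou_step (φ g ψ : ℝ → ℝ) (μ : Measure ℝ)
    (hφ : Measurable φ) (hg : Measurable g) (hψ : Measurable ψ) (C : ENNReal) (N₀ : ℝ)
    (h : ∀ N : ℝ, N₀ ≤ N → ∫⁻ x, (ENNReal.ofReal ((φ x - min (g x) N) ^ 2) +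
      ENNReal.ofReal ((min (g x) N - ψ x) ^ 2)) ∂μ ≤ C) :
    (∫⁻ x, ENNReal.ofReal ((φ x - g x) ^ 2) ∂μ) + ∫⁻ x, ENNReal.ofReal ((g x - ψ x) ^ 2) ∂μ ≤ C := by
  have hA : Measurable fun x => ENNReal.ofReal ((φ x - g x) ^ 2) :=
    ((hφ.sub hg).pow_const 2).ennreal_ofReal
  rw [← lintegral_add_left hA]
  set F : ℕ → ℝ → ENNReal := fun n x => ENNReal.ofReal ((φ x - min (g x) n) ^ 2) +
      ENNReal.ofReal ((min (g x) n - ψ x) ^ 2) with hF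
  have hFm : ∀ n, Measurable (F n) := by
    intro n
    have hgN : Measurable fun x => min (g x) (n:ℝ) := hg.min measurable_const
    exact ((hφ.sub hgN).pow_const 2).ennreal_ofReal.add ((hgN.sub hψ).pow_const 2).ennreal_ofReal
  have hlim : ∀ x, ENNReal.ofReal ((φ x - g x) ^ 2) + ENNReal.ofReal ((g x - ψ x) ^ 2)
      = liminf (fun n => F n x) atTop := by
    intro x
    symm
    apply Tendsto.liminf_eq
    apply tendsto_const_nhds.congr'
    obtain ⟨k, hk⟩ := exists_nat_ge (g x)
    filter_upwards [eventually_ge_atTop k] with n hn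
    have : g x ≤ n := hk.trans (by exact_mod_cast hn)
    simp only [hF, min_eq_left this]
  simp_rw [hlim]
  refine (lintegral_liminf_le hFm).trans ?_
  refine liminf_le_of_frequently_le' (Eventually.frequently ?_)
  obtain ⟨k, hk⟩ := exists_nat_ge N₀
  filter_upwards [eventually_ge_atTop k] with n hn
  exact h n (hk.trans (by exact_mod_cast hn))

theorem L2_projection_lemma (M : ℝ) (hM : 0 < M)
    (φ : ℝ → ℝ) (hmeas : Measurable φ)
    (hnonneg : ∀ x ∈ Icc (0 : ℝ) M, 0 ≤ φ x)
    (hcont : ∀ᵐ x ∂(volume.restrict (Icc (0 : ℝ) M)), ContinuousAt φ x)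
    (hint : IntegrableOn φ (Icc (0 : ℝ) M))
    (Φstar : ℝ → ℝ)
    (hconv : ConvexOn ℝ (Icc (0 : ℝ) M) Φstar)
    (hminor : ∀ z ∈ Icc (0 : ℝ) M, Φstar z ≤ ∫ x in Icc (0 : ℝ) z, φ x)
    (hgreatest : ∀ ρ : ℝ → ℝ, ConvexOn ℝ (Icc (0 : ℝ) M) ρ →
      (∀ z ∈ Icc (0 : ℝ) M, ρ z ≤ ∫ x in Icc (0 : ℝ) z, φ x) →
      ∀ z ∈ Icc (0 : ℝ) M, ρ z ≤ Φstar z)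
    (ψ : ℝ → ℝ) (hψmono : MonotoneOn ψ (Icc (0 : ℝ) M))
    (hψrc : ∀ x ∈ Ico (0 : ℝ) M, ContinuousWithinAt ψ (Ici x) x)
    (hψnn : ∀ x ∈ Icc (0 : ℝ) M, 0 ≤ ψ x) :
    (∫⁻ x in Icc (0 : ℝ) M,
        ENNReal.ofReal ((φ x - derivWithin Φstar (Ici x) x) ^ 2)) +
      ∫⁻ x in Icc (0 : ℝ) M,
        ENNReal.ofReal ((derivWithin Φstar (Ici x) x - ψ x) ^ 2)
      ≤ ∫⁻ x in Icc (0 : ℝ) M, ENNReal.ofReal ((φ x - ψ x) ^ 2) := by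
  have hMm : M ∈ Icc 0 M := ⟨hM.le, le_rfl⟩
  set Φ : ℝ → ℝ := fun z => ∫ x in Icc (0 : ℝ) z, φ x with hΦ
  have hΦc : ContinuousOn Φ (Icc 0 M) := intervalIntegral.continuousOn_primitive_Icc hint
  have hΦnn : ∀ z ∈ Icc 0 M, 0 ≤ Φ z := fun z hz =>
    setIntegral_nonneg measurableSet_Icc fun x hx => hnonneg x ⟨hx.1, hx.2.trans hz.2⟩
  have hΦ0 : Φ 0 = 0 := by simp [hΦ]
  obtain ⟨hG0, hGM, hGnn, hGc⟩ := gcm_cont M hM Φ Φstar hΦc hΦnn hΦ0 hconv hminor hgreatest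
  obtain ⟨hgm, hgnn, hgi, hgint⟩ := gcm_deriv M hM Φstar hG0 hGnn hGc hconv
  have hflat := gcm_flat M Φ Φstar hΦc hGc hconv hminor hgreatest
  have hgmeas : Measurable fun x => derivWithin Φstar (Ici x) x := measurable_derivWithin_Ici Φstar
  set g : ℝ → ℝ := fun x => derivWithin Φstar (Ici x) x with hg
  -- a globally monotone version of `ψ`
  set χ : ℝ → ℝ := fun x => ψ (projIcc 0 M hM.le x) with hχ
  have hχmono : Monotone χ := fun x y hxy =>
    hψmono (projIcc 0 M hM.le x).2 (projIcc 0 M hM.le y).2 (monotone_projIcc _ hxy)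
  have hχmeas : Measurable χ := hχmono.measurable
  have hχψ : ∀ x ∈ Icc 0 M, χ x = ψ x := fun x hx => by
    simp only [hχ, projIcc_of_mem hM.le hx]
  have hχb : ∀ x, 0 ≤ χ x ∧ χ x ≤ ψ M := fun x =>
    ⟨hψnn _ (projIcc 0 M hM.le x).2, hψmono (projIcc 0 M hM.le x).2 hMm (projIcc 0 M hM.le x).2.2⟩
  have c1 : ∫⁻ x in Icc (0 : ℝ) M, ENNReal.ofReal ((g x - ψ x) ^ 2) =
      ∫⁻ x in Icc (0 : ℝ) M, ENNReal.ofReal ((g x - χ x) ^ 2) :=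
    setLIntegral_congr_fun measurableSet_Icc fun x hx => by simp only [hχψ x hx]
  have c2 : ∫⁻ x in Icc (0 : ℝ) M, ENNReal.ofReal ((φ x - ψ x) ^ 2) =
      ∫⁻ x in Icc (0 : ℝ) M, ENNReal.ofReal ((φ x - χ x) ^ 2) :=
    setLIntegral_congr_fun measurableSet_Icc fun x hx => by simp only [hχψ x hx]
  change (∫⁻ x in Icc (0 : ℝ) M, ENNReal.ofReal ((φ x - g x) ^ 2)) +
      ∫⁻ x in Icc (0 : ℝ) M, ENNReal.ofReal ((g x - ψ x) ^ 2) ≤ _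
  rw [c1, c2, ← restrict_Ioo_eq_restrict_Icc]
  have hφi : IntegrableOn φ (Ioo 0 M) := hint.mono_set Ioo_subset_Icc_self
  -- tails
  have htail : ∀ a, 0 ≤ a → a < M → ∫ x in Ioo a M, (φ x - g x) = Φstar a - Φ a := by
    intro a ha haM
    have hsub : Ioo a M ⊆ Ioo 0 M := Ioo_subset_Ioo_left ha
    rw [integral_sub (hφi.mono_set hsub) (hgi.mono_set hsub), hgint a ha haM, hGM]
    have : Φ M = Φ a + ∫ x in Ioo a M, φ x := by
      simp only [hΦ]
      rw [← integral_Ioc_eq_integral_Ioo, ← setIntegral_union _ measurableSet_Ioc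
        (hint.mono_set (Icc_subset_Icc_right haM.le))
        (hint.mono_set (fun x hx => ⟨ha.trans hx.1.le, hx.2⟩)), Icc_union_Ioc_eq_Icc ha haM.le]
      rw [Set.disjoint_left]
      intro x hx hx'
      exact absurd hx'.1 (not_lt.2 hx.2)
    linarith
  have hfi : Integrable (fun x => φ x - g x) (volume.restrict (Ioo 0 M)) := hφi.sub hgi
  have h1 : ∫ x in Ioo 0 M, (φ x - g x) * χ x ≤ 0 := by
    rw [layer_cake_aux _ χ _ hfi hχmeas (ψ M) (Eventually.of_forall hχb)]
    refine setIntegral_nonpos measurableSet_Ioc fun t _ => ?_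
    rcases tail_integral_aux M (fun x => φ x - g x) χ hχmeas (hχmono.monotoneOn _) t with h | h
    · exact h.le
    · obtain ⟨-, ha, hb, hc⟩ := h
      rw [hc, htail _ ha hb]
      linarith [hminor _ ⟨ha, hb.le⟩]
  have h2 : ∀ N, 0 ≤ N → ∫ x in Ioo 0 M, (φ x - g x) * min (g x) N = 0 := by
    intro N hN
    have hm : Measurable fun x => min (g x) N := hgmeas.min measurable_const
    have hmm : MonotoneOn (fun x => min (g x) N) (Ioo 0 M) := fun x hx y hy hxy =>
      min_le_min_right _ (hgm hx hy hxy)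
    rw [layer_cake_aux _ (fun x => min (g x) N) _ hfi hm N
      ((ae_restrict_mem measurableSet_Ioo).mono fun x hx =>
        ⟨le_min (hgnn x hx) hN, min_le_right _ _⟩)]
    refine setIntegral_eq_zero_of_forall_eq_zero fun t _ => ?_
    rcases tail_integral_aux M (fun x => φ x - g x) _ hm hmm t with h | h
    · exact h
    obtain ⟨hne, ha, hb, hc⟩ := h
    rw [hc, htail _ ha hb]
    set S := {x | t < min (g x) N} ∩ Ioo 0 M with hS
    rcases eq_or_lt_of_le ha with h0 | h0
    · rw [← h0, hG0, hΦ0, sub_zero]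
    by_contra hcon
    have hlt : Φstar (sInf S) < Φ (sInf S) :=
      lt_of_le_of_ne (hminor _ ⟨ha, hb.le⟩) fun h => hcon (by rw [h, sub_self])
    obtain ⟨δ, hδ, s, hsub, hconst⟩ := hflat _ ⟨h0, hb⟩ hlt
    obtain ⟨z, hz, hzlt⟩ := exists_lt_of_csInf_lt hne (show sInf S < sInf S + δ by linarith)
    have hbdd : BddBelow S := ⟨0, fun x hx => hx.2.1.le⟩
    have hz1 : sInf S ≤ z := csInf_le hbdd hz
    have hzm : z ∈ Ioo (sInf S - δ) (sInf S + δ) := ⟨by linarith, hzlt⟩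
    have hwm : sInf S - δ / 2 ∈ Ioo (sInf S - δ) (sInf S + δ) := ⟨by linarith, by linarith⟩
    have hgeq : g (sInf S - δ / 2) = g z := (hconst _ hwm).trans (hconst _ hzm).symm
    have hwS : sInf S - δ / 2 ∈ S := by
      refine ⟨?_, hsub hwm⟩
      have := hz.1
      simp only [mem_ofPred_eq] at this ⊢
      rwa [hgeq]
    linarith [csInf_le hbdd hwS]
  by_cases hfin : ∫⁻ x in Ioo 0 M, ENNReal.ofReal ((φ x - χ x) ^ 2) = ⊤
  · rw [hfin]; exact le_top
  refine fatou_step φ g χ _ hmeas hgmeas hχmeas _ (ψ M) fun N hN => ?_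
  have hN0 : 0 ≤ N := (hψnn M hMm).trans hN
  exact trunc_ineq M φ g χ _ hmeas hgmeas hχmeas hφi hgi
    ((ae_restrict_mem measurableSet_Ioo).mono fun x hx => hgnn x hx) N hN0
    (Eventually.of_forall fun x => ⟨(hχb x).1, (hχb x).2.trans hN⟩) h1 (h2 N hN0) hfin
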